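/- Let G be a finite group, k a field, χ a subadditive function on the finite dimensional kG-modules, and χ'(X) := Σ_{i=1}^m χ(X ⊗_k S_i) where S_1, …, S_m represent the isomorphism classes of simple kG-modules. Then χ' is tensor closed, Adloc(χ') ⊆ Adloc(χ), and for every tensor closed subadditive function χ'' with Adloc(χ'') ⊆ Adloc(χ) one has Adloc(χ'') ⊆ Adloc(χ'). In other words, χ' is, up to equivalence (equality of additive loci), the unique minimal tensor closed subadditive function χ' with χ' ≥ χ in the order defined by χ ≥ χ' iff Adloc(χ) ⊆ Adloc(χ'). -/

import Mathlib

/-- The composition length of a module (the length of a composition series,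
zero if none exists). -/
noncomputable def compLength (R : Type) [Ring R] (M : Type) [AddCommGroup M] [Module R M] : ℕ := by
  classical
  exact if h : ∃ s : CompositionSeries (Submodule R M), s.head = ⊥ ∧ s.last = ⊤ then
    h.choose.length else 0

/-- A module `M` is endofinite if it has finite composition length over its
endomorphism ring, which acts on `M` by application. -/
def IsEndofinite (A : Type) [Ring A] (M : Type) [AddCommGroup M] [Module A M] : Prop :=
  IsFiniteLength (Module.End A M) M

/-- The subadditive function `χ_M` associated to a module `M`:
`χ_M(X) = ℓ_{End_A(M)} Hom_A(X, M)`, where `End_A(M)` acts by postcomposition. -/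
noncomputable def chiMod (A : Type) [Ring A] (M : Type) [AddCommGroup M] [Module A M]
    (X : Type) [AddCommGroup X] [Module A X] : ℕ :=
  compLength (Module.End A M) (X →ₗ[A] M)

/-- A subadditive function on the finite dimensional (i.e. finitely generated)
modules over a finite dimensional algebra `A`: it depends only on the isomorphism
class, is additive on direct sums, and satisfies `χ(X) + χ(Z) ≥ χ(Y)` for every
exact sequence `X → Y → Z → 0`. -/
def IsSubadditive (A : Type) [Ring A]
    (χ : (X : Type) → [AddCommGroup X] → [Module A X] → ℕ) : Prop :=
  (∀ (X Y : Type) [AddCommGroup X] [Module A X] [AddCommGroup Y] [Module A Y],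
      Module.Finite A X → Module.Finite A Y →
      (X ≃ₗ[A] Y) → χ X = χ Y) ∧
  (∀ (X Y : Type) [AddCommGroup X] [Module A X] [AddCommGroup Y] [Module A Y],
      Module.Finite A X → Module.Finite A Y →
      χ (X × Y) = χ X + χ Y) ∧
  (∀ (X Y Z : Type) [AddCommGroup X] [Module A X] [AddCommGroup Y] [Module A Y]
      [AddCommGroup Z] [Module A Z],
      Module.Finite A X → Module.Finite A Y → Module.Finite A Z →
      ∀ (f : X →ₗ[A] Y) (g : Y →ₗ[A] Z),
      Function.Exact f g → Function.Surjective g → χ Y ≤ χ X + χ Z)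

/-- Membership in the additive locus `Adloc(χ)`: `Z` is finite dimensional and
`χ(X) - χ(Y) + χ(Z) = 0` for every short exact sequence `0 → X → Y → Z → 0` of
finite dimensional modules. -/
def MemAdloc (A : Type) [Ring A]
    (χ : (X : Type) → [AddCommGroup X] → [Module A X] → ℕ)
    (Z : Type) [AddCommGroup Z] [Module A Z] : Prop :=
  Module.Finite A Z ∧
  ∀ (X Y : Type) [AddCommGroup X] [Module A X] [AddCommGroup Y] [Module A Y],
    Module.Finite A X → Module.Finite A Y →
    ∀ (f : X →ₗ[A] Y) (g : Y →ₗ[A] Z),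
    Function.Injective f → Function.Exact f g → Function.Surjective g →
    χ X + χ Z = χ Y

/-- The tensor product over `k` of two `kG`-modules, with the diagonal `G`-action. -/
noncomputable abbrev dtensor (k G : Type) [Field k] [Group G] (M N : Type)
    [AddCommGroup M] [Module (MonoidAlgebra k G) M]
    [AddCommGroup N] [Module (MonoidAlgebra k G) N] : Type :=
  ((Representation.ofModule (k := k) (G := G) M).tprod (Representation.ofModule N)).asModule

noncomputable instance dtensorAddCommGroup (k G : Type) [Field k] [Group G] (M N : Type)
    [AddCommGroup M] [Module (MonoidAlgebra k G) M]
    [AddCommGroup N] [Module (MonoidAlgebra k G) N] : AddCommGroup (dtensor k G M N) :=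
  @TensorProduct.addCommGroup k _ (RestrictScalars k (MonoidAlgebra k G) M)
    (RestrictScalars k (MonoidAlgebra k G) N)
    (instAddCommGroupRestrictScalars k (MonoidAlgebra k G) M)
    (instAddCommMonoidRestrictScalars k (MonoidAlgebra k G) N)
    (RestrictScalars.module k (MonoidAlgebra k G) M)
    (RestrictScalars.module k (MonoidAlgebra k G) N)

noncomputable instance dtensorModule (k G : Type) [Field k] [Group G] (M N : Type)
    [AddCommGroup M] [Module (MonoidAlgebra k G) M]
    [AddCommGroup N] [Module (MonoidAlgebra k G) N] :
    @Module (MonoidAlgebra k G) (dtensor k G M N) _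
      (dtensorAddCommGroup k G M N).toAddCommMonoid :=
  Representation.instModuleMonoidAlgebraAsModule
    ((Representation.ofModule (k := k) (G := G) M).tprod (Representation.ofModule N))

/-- A function on `kG`-modules is tensor closed if its additive locus is closed under
tensoring (over `k`, with diagonal `G`-action) with finite dimensional modules. -/
def TensorClosed (k G : Type) [Field k] [Group G]
    (χ : (X : Type) → [AddCommGroup X] → [Module (MonoidAlgebra k G) X] → ℕ) : Prop :=
  ∀ (M N : Type) [AddCommGroup M] [Module (MonoidAlgebra k G) M]
    [AddCommGroup N] [Module (MonoidAlgebra k G) N],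
    MemAdloc (MonoidAlgebra k G) χ M → Module.Finite (MonoidAlgebra k G) N →
    MemAdloc (MonoidAlgebra k G) χ (dtensor k G M N)

section
variable (k G : Type) [Field k] [Group G] {m : ℕ}

/-- `S` is a complete set of representatives of the isomorphism classes of simple
`kG`-modules. -/
def IsCompleteSetOfSimples (S : Fin m → Type)
    [∀ i, AddCommGroup (S i)] [∀ i, Module (MonoidAlgebra k G) (S i)] : Prop :=
  (∀ i, IsSimpleModule (MonoidAlgebra k G) (S i)) ∧
  (∀ i j, i ≠ j → IsEmpty (S i ≃ₗ[MonoidAlgebra k G] S j)) ∧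
  (∀ (N : Type) (_ : AddCommGroup N) (_ : Module (MonoidAlgebra k G) N),
    IsSimpleModule (MonoidAlgebra k G) N → ∃ i, Nonempty (N ≃ₗ[MonoidAlgebra k G] S i))

end

/-!
Tensoring over `k` with a `kG`-module is exact and, by the tensor–hom adjunction, preserves
projective modules. On the other hand, a module `W` lies in `Adloc(χ)` as soon as `χ` is additive
on one short exact sequence `0 → K → Q → W → 0` with `Q` projective: for `0 → X → Y → W → 0` lift
`Q → W` to `Q → Y`, which gives an exact sequence `K → X × Q → Y → 0` and hence
`χ X + χ Q ≤ χ K + χ Y`. Since additivity of a sum of subadditive functions is additivity of each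
term, a projective presentation of `Z` tensored with the `S i` shows that `Z ∈ Adloc(χ')` if and
only if `Z` is finite dimensional and all `Z ⊗ S i` lie in `Adloc(χ)`.

As `Adloc(χ)` is closed under extensions, induction along a composition series of `N` then yields
`Z ⊗ N ∈ Adloc(χ)` for all finite dimensional `N`. Associativity of the tensor product makes `χ'`
tensor closed, the choice `N = k` gives `Adloc(χ') ⊆ Adloc(χ)`, and the description of `Adloc(χ')`
gives minimality.
-/

open scoped MonoidAlgebra TensorProduct

section Intertwining

open Representation

variable {k G V W U U' : Type*} [CommSemiring k]
  [AddCommMonoid V] [Module k V] [AddCommMonoid W] [Module k W]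
  [AddCommMonoid U] [Module k U] [AddCommMonoid U'] [Module k U']

section Monoid

variable [Monoid G] {ρ : Representation k G V} {σ : Representation k G W}
  {τ : Representation k G U} {τ' : Representation k G U'}

/-- Isomorphic representations have isomorphic associated `k[G]`-modules. -/
noncomputable def asModuleCongr (e : ρ.Equiv σ) : ρ.asModule ≃ₗ[k[G]] σ.asModule :=
  .ofBijective (IntertwiningMap.equivLinearMapAsModule ρ σ e.toIntertwiningMap)
    e.toLinearEquiv.bijective

/-- Functoriality of the tensor product of representations in isomorphisms. -/
noncomputable def tprodCongr (e : ρ.Equiv τ) (e' : σ.Equiv τ') : (ρ.tprod σ).Equiv (τ.tprod τ') :=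
  .mk (TensorProduct.congr e.toLinearEquiv e'.toLinearEquiv)
    (e.toIntertwiningMap.tensor e'.toIntertwiningMap).isIntertwining'

/-- Passing from a `k[G]`-module to a representation and back gives the same module. -/
noncomputable def asModuleOfModuleEquiv (k G : Type*) [CommSemiring k] [Monoid G] (M : Type*)
    [AddCommMonoid M] [Module k[G] M] : (ofModule (k := k) (G := G) M).asModule ≃ₗ[k[G]] M where
  toAddEquiv := (ofModule M).asModuleEquiv.toAddEquiv.trans (RestrictScalars.addEquiv k k[G] M)
  map_smul' := smul_ofModule_asModule M

/-- Passing from a representation to a `k[G]`-module and back gives the same representation. -/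
noncomputable def ofModuleAsModuleEquiv (ρ : Representation k G V) :
    (ofModule (k := k) (G := G) ρ.asModule).Equiv ρ :=
  ((IntertwiningMap.equivLinearMapAsModule _ ρ).symm
    (asModuleOfModuleEquiv k G ρ.asModule).toLinearMap).ofBijective
    (asModuleOfModuleEquiv k G ρ.asModule).bijective

/-- A `k[G]`-linear map, viewed as an intertwining map of the associated representations. -/
noncomputable def ofModuleMap {M N : Type*} [AddCommMonoid M] [Module k[G] M] [AddCommMonoid N]
    [Module k[G] N] (f : M →ₗ[k[G]] N) :
    IntertwiningMap (ofModule (k := k) (G := G) M) (ofModule (k := k) (G := G) N) :=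
  (IntertwiningMap.equivLinearMapAsModule _ _).symm <|
    (asModuleOfModuleEquiv k G N).symm ∘ₗ f ∘ₗ (asModuleOfModuleEquiv k G M).toLinearMap

theorem exists_comp_eq_of_projective [Module.Projective k[G] ρ.asModule]
    {q : IntertwiningMap τ τ'} (hq : Function.Surjective q) (f : IntertwiningMap ρ τ') :
    ∃ w : IntertwiningMap ρ τ, q.comp w = f := by
  obtain ⟨w, hw⟩ := Module.projective_lifting_property
    (IntertwiningMap.equivLinearMapAsModule τ τ' q)
    (IntertwiningMap.equivLinearMapAsModule ρ τ' f) hq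
  exact ⟨(IntertwiningMap.equivLinearMapAsModule ρ τ).symm w,
    (IntertwiningMap.equivLinearMapAsModule ρ τ').injective hw⟩

end Monoid

section Group

variable [Group G] {ρ : Representation k G V} {σ : Representation k G W}
  {τ : Representation k G U} {τ' : Representation k G U'}

/-- One direction of the tensor–hom adjunction for representations. -/
noncomputable def tprodCurry (f : IntertwiningMap (ρ.tprod σ) τ) :
    IntertwiningMap ρ (linHom σ τ) where
  toLinearMap := TensorProduct.curry f.toLinearMap
  isIntertwining' g := by
    ext v w
    simpa [IntertwiningMap.toLinearMap_apply] using f.isIntertwining _ _ g (v ⊗ₜ σ g⁻¹ w)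

/-- The other direction of the tensor–hom adjunction for representations. -/
noncomputable def tprodUncurry (f : IntertwiningMap ρ (linHom σ τ)) :
    IntertwiningMap (ρ.tprod σ) τ where
  toLinearMap := TensorProduct.lift f.toLinearMap
  isIntertwining' g := by
    ext v w
    simp [IntertwiningMap.toLinearMap_apply, f.isIntertwining]

/-- Postcomposition with an intertwining map: functoriality of `linHom σ` in its target. -/
noncomputable def linHomMap (σ : Representation k G W) (q : IntertwiningMap τ τ') :
    IntertwiningMap (linHom σ τ) (linHom σ τ') where
  toLinearMap := LinearMap.llcomp k W U U' q.toLinearMap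
  isIntertwining' g := by
    ext f w
    simp [IntertwiningMap.toLinearMap_apply, q.isIntertwining]

theorem linHomMap_surjective [Module.Projective k W] {q : IntertwiningMap τ τ'}
    (hq : Function.Surjective q) : Function.Surjective (linHomMap σ q) := fun f ↦
  Module.projective_lifting_property q.toLinearMap f hq

theorem exists_comp_eq_of_projective_tprod [Module.Projective k[G] ρ.asModule]
    [Module.Projective k W] {q : IntertwiningMap τ τ'} (hq : Function.Surjective q)
    (f : IntertwiningMap (ρ.tprod σ) τ') :
    ∃ w : IntertwiningMap (ρ.tprod σ) τ, q.comp w = f := by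
  obtain ⟨w, hw⟩ := exists_comp_eq_of_projective (linHomMap_surjective (σ := σ) hq) (tprodCurry f)
  refine ⟨tprodUncurry w, IntertwiningMap.ext (TensorProduct.ext' fun v w' ↦ ?_)⟩
  exact congr($hw v w')

theorem projective_asModule_tprod [Module.Projective k[G] ρ.asModule] [Module.Projective k W] :
    Module.Projective k[G] (ρ.tprod σ).asModule := by
  refine .of_lifting_property'' fun q hq ↦ ?_
  let e := asModuleOfModuleEquiv k G ((ρ.tprod σ).asModule →₀ k[G])
  obtain ⟨w, hw⟩ := exists_comp_eq_of_projective_tprod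
    (q := (IntertwiningMap.equivLinearMapAsModule _ (ρ.tprod σ)).symm (q ∘ₗ e.toLinearMap))
    (hq.comp e.surjective) (.id (ρ.tprod σ))
  exact ⟨e.toLinearMap ∘ₗ IntertwiningMap.equivLinearMapAsModule _ _ w,
    congrArg (IntertwiningMap.equivLinearMapAsModule _ _) hw⟩

end Group

end Intertwining

section Dtensor

open Representation

variable {k G M M' M'' N N' L : Type} [Field k] [Group G] [AddCommGroup M] [Module k[G] M]
  [AddCommGroup M'] [Module k[G] M'] [AddCommGroup M''] [Module k[G] M'']
  [AddCommGroup N] [Module k[G] N] [AddCommGroup N'] [Module k[G] N']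
  [AddCommGroup L] [Module k[G] L]

/-- The `k`-module structure on `RestrictScalars k A M`, over the additive structure underlying its
additive group structure: instance search does not identify that one with the default. -/
noncomputable instance restrictScalarsModuleOfGroup {k A M : Type*} [CommSemiring k] [Ring A]
    [Algebra k A] [AddCommGroup M] [Module A M] :
    @Module k (RestrictScalars k A M) _ AddCommGroup.toAddCommMonoid :=
  RestrictScalars.module k A M

instance free_restrictScalars :
    @Module.Free k (RestrictScalars k k[G] M) _ _ (RestrictScalars.module k _ M) :=
  Module.Free.of_divisionRing k (RestrictScalars k k[G] M)

/-- The tensor product of two `k[G]`-linear maps: functoriality of `dtensor`. -/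
noncomputable def dtensorMap (f : M →ₗ[k[G]] M') (f' : N →ₗ[k[G]] N') :
    dtensor k G M N →ₗ[k[G]] dtensor k G M' N' :=
  IntertwiningMap.equivLinearMapAsModule _ _ ((ofModuleMap f).tensor (ofModuleMap f'))

theorem dtensorMap_injective {f : M →ₗ[k[G]] M'} {f' : N →ₗ[k[G]] N'}
    (hf : Function.Injective f) (hf' : Function.Injective f') :
    Function.Injective (dtensorMap f f') :=
  TensorProduct.map_injective_of_flat_flat (ofModuleMap f).toLinearMap (ofModuleMap f').toLinearMap
    hf hf'

theorem dtensorMap_surjective {f : M →ₗ[k[G]] M'} {f' : N →ₗ[k[G]] N'}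
    (hf : Function.Surjective f) (hf' : Function.Surjective f') :
    Function.Surjective (dtensorMap f f') :=
  TensorProduct.map_surjective (g := (ofModuleMap f).toLinearMap)
    (g' := (ofModuleMap f').toLinearMap) hf hf'

theorem exact_dtensorMap_id {f : M →ₗ[k[G]] M'} {g : M' →ₗ[k[G]] M''}
    (hfg : Function.Exact f g) (hg : Function.Surjective g) :
    Function.Exact (dtensorMap f (.id : N →ₗ[k[G]] N)) (dtensorMap g (.id : N →ₗ[k[G]] N)) :=
  rTensor_exact (f := (ofModuleMap f).toLinearMap) (g := (ofModuleMap g).toLinearMap)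
    (RestrictScalars k k[G] N) hfg hg

theorem exact_id_dtensorMap {f : M →ₗ[k[G]] M'} {g : M' →ₗ[k[G]] M''}
    (hfg : Function.Exact f g) (hg : Function.Surjective g) :
    Function.Exact (dtensorMap (.id : N →ₗ[k[G]] N) f) (dtensorMap (.id : N →ₗ[k[G]] N) g) :=
  lTensor_exact (f := (ofModuleMap f).toLinearMap) (g := (ofModuleMap g).toLinearMap)
    (RestrictScalars k k[G] N) hfg hg

/-- Functoriality of `dtensor` in isomorphisms. -/
noncomputable def dtensorCongr (e : M ≃ₗ[k[G]] M') (e' : N ≃ₗ[k[G]] N') :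
    dtensor k G M N ≃ₗ[k[G]] dtensor k G M' N' :=
  .ofBijective (dtensorMap e.toLinearMap e'.toLinearMap)
    ⟨dtensorMap_injective e.injective e'.injective,
      dtensorMap_surjective e.surjective e'.surjective⟩

variable (k G M N L) in
/-- Associativity of the tensor product of `k[G]`-modules. -/
noncomputable def dtensorAssoc :
    dtensor k G (dtensor k G M N) L ≃ₗ[k[G]] dtensor k G M (dtensor k G N L) :=
  asModuleCongr <| (tprodCongr (ofModuleAsModuleEquiv _) (.refl _)).trans <|
    (Representation.TensorProduct.assoc _ _ _).trans <|
      tprodCongr (.refl _) (ofModuleAsModuleEquiv _).symm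

variable (k G M) in
/-- The trivial representation is a unit for the tensor product of `k[G]`-modules. -/
noncomputable def dtensorTrivial :
    dtensor k G M (trivial k G k).asModule ≃ₗ[k[G]] M :=
  (asModuleCongr <| (tprodCongr (.refl _) (ofModuleAsModuleEquiv _)).trans
    (Representation.TensorProduct.rid k _)).trans (asModuleOfModuleEquiv k G M)

instance subsingleton_dtensor [hN : Subsingleton N] : Subsingleton (dtensor k G M N) :=
  have : Subsingleton (RestrictScalars k k[G] N) := hN
  inferInstanceAs (Subsingleton (RestrictScalars k k[G] M ⊗[k] RestrictScalars k k[G] N))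

-- Left to itself, instance search finds the additive structure of `Representation.asModule` here
-- instead of that of `dtensorAddCommGroup`, the one seen by `IsSubadditive` and `MemAdloc`.
instance projective_dtensor [Module.Projective k[G] M] :
    @Module.Projective k[G] _ (dtensor k G M N) AddCommGroup.toAddCommMonoid _ := by
  have : Module.Projective k[G] (ofModule (k := k) (G := G) M).asModule :=
    .of_equiv (asModuleOfModuleEquiv k G M).symm
  exact projective_asModule_tprod

theorem finite_restrictScalars [Finite G] [Module.Finite k[G] M] :
    Module.Finite k (RestrictScalars k k[G] M) :=
  let := RestrictScalars.moduleOrig k k[G] M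
  have : Module.Finite k[G] (RestrictScalars k k[G] M) := ‹Module.Finite k[G] M›
  Module.Finite.trans k[G] _

instance finite_dtensor [Finite G] [Module.Finite k[G] M] [Module.Finite k[G] N] :
    @Module.Finite k[G] (dtensor k G M N) _ AddCommGroup.toAddCommMonoid _ := by
  have := finite_restrictScalars (k := k) (G := G) (M := M)
  have := finite_restrictScalars (k := k) (G := G) (M := N)
  exact .of_restrictScalars_finite k k[G] (dtensor k G M N)

end Dtensor

section Exact

variable {R K Q W X Y : Type*} [Ring R] [AddCommGroup K] [Module R K] [AddCommGroup Q] [Module R Q]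
  [AddCommGroup W] [Module R W] [AddCommGroup X] [Module R X] [AddCommGroup Y] [Module R Y]
  {j : K →ₗ[R] Q} {p : Q →ₗ[R] W} {f : X →ₗ[R] Y} {g : Y →ₗ[R] W} {w : Q →ₗ[R] Y}

theorem exists_comp_eq_of_exact (hf : Function.Injective f) (hfg : Function.Exact f g)
    {h : K →ₗ[R] Y} (hgh : g ∘ₗ h = 0) : ∃ r : K →ₗ[R] X, f ∘ₗ r = h := by
  let e := LinearEquiv.ofInjective f hf
  let h' := h.codRestrict (LinearMap.range f) fun x ↦ (hfg _).1 (LinearMap.congr_fun hgh x)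
  exact ⟨e.symm ∘ₗ h', LinearMap.ext fun x ↦ congrArg Subtype.val (e.apply_symm_apply (h' x))⟩

theorem surjective_coprod_of_exact (hfg : Function.Exact f g) (hp : Function.Surjective p)
    (hw : g ∘ₗ w = p) : Function.Surjective (f.coprod w) := fun y ↦ by
  obtain ⟨q, hq⟩ := hp (g y)
  obtain ⟨x, hx⟩ := (hfg (y - w q)).1 (by simp [← hq, ← hw])
  exact ⟨(x, q), by simp [hx]⟩

theorem exact_neg_prod_coprod {r : K →ₗ[R] X} (hf : Function.Injective f)
    (hfg : Function.Exact f g) (hjp : Function.Exact j p) (hw : g ∘ₗ w = p)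
    (hr : f ∘ₗ r = w ∘ₗ j) : Function.Exact ((-r).prod j) (f.coprod w) := by
  have hr' (x : K) : f (r x) = w (j x) := LinearMap.congr_fun hr x
  rintro ⟨x, q⟩
  constructor
  · intro h
    have hpq : p q = 0 := by simpa [hfg.apply_apply_eq_zero, ← hw] using congrArg g h
    obtain ⟨c, rfl⟩ := (hjp q).1 hpq
    refine ⟨c, Prod.ext (hf ?_) rfl⟩
    simpa [hr'] using (eq_neg_of_add_eq_zero_left h).symm
  · rintro ⟨c, hc⟩
    obtain ⟨rfl, rfl⟩ := Prod.ext_iff.1 hc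
    simp [hr']

end Exact

section AdditiveLocus

variable {A : Type} [Ring A] {χ : (X : Type) → [AddCommGroup X] → [Module A X] → ℕ}
  {K Q W Z Z₁ Z₂ : Type} [AddCommGroup K] [Module A K] [AddCommGroup Q] [Module A Q]
  [AddCommGroup W] [Module A W] [AddCommGroup Z] [Module A Z] [AddCommGroup Z₁] [Module A Z₁]
  [AddCommGroup Z₂] [Module A Z₂]

theorem IsSubadditive.map_eq_zero_of_subsingleton (hχ : IsSubadditive A χ) [Subsingleton Z] :
    χ Z = 0 := by
  have := uniqueOfSubsingleton (0 : Z)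
  have h := hχ.1 (Z × Z) Z inferInstance inferInstance .prodUnique
  rw [hχ.2.1 Z Z inferInstance inferInstance] at h
  omega

theorem MemAdloc.of_equiv (hχ : IsSubadditive A χ) (h : MemAdloc A χ Z) (e : Z ≃ₗ[A] W) :
    MemAdloc A χ W := by
  have := h.1
  have : Module.Finite A W := .equiv e
  refine ⟨this, fun X Y _ _ _ _ hX hY f g hf hfg hg ↦ ?_⟩
  rw [← hχ.1 Z W h.1 this e]
  exact h.2 X Y hX hY f (e.symm ∘ₗ g) hf (hfg.comp_injective _ e.symm.injective (map_zero _))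
    (e.symm.surjective.comp hg)

theorem MemAdloc.of_subsingleton (hχ : IsSubadditive A χ) [Subsingleton Z] : MemAdloc A χ Z := by
  refine ⟨inferInstance, fun X Y _ _ _ _ hX hY f g hf hfg _ ↦ ?_⟩
  have hf' : Function.Surjective f := fun y ↦ (hfg y).1 (Subsingleton.elim _ _)
  rw [hχ.map_eq_zero_of_subsingleton (Z := Z), add_zero]
  exact hχ.1 X Y hX hY (.ofBijective f ⟨hf, hf'⟩)

theorem MemAdloc.of_exact [IsNoetherianRing A] (h₁ : MemAdloc A χ Z₁) (h₂ : MemAdloc A χ Z₂)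
    {i : Z₁ →ₗ[A] Z} {p : Z →ₗ[A] Z₂} (hi : Function.Injective i) (hip : Function.Exact i p)
    (hp : Function.Surjective p) : MemAdloc A χ Z := by
  have := h₁.1
  have := h₂.1
  have hZ : Module.Finite A Z := .of_exact hip hp
  refine ⟨hZ, fun X Y _ _ _ _ hX hY f g hf hfg hg ↦ ?_⟩
  let K := LinearMap.ker (p ∘ₗ g)
  let f' : X →ₗ[A] K := f.codRestrict K fun x ↦ by simp [K, hfg.apply_apply_eq_zero]
  obtain ⟨g', hig'⟩ : ∃ g' : K →ₗ[A] Z₁, i ∘ₗ g' = g ∘ₗ K.subtype :=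
    exists_comp_eq_of_exact hi hip (LinearMap.ext fun y ↦ y.2)
  have hg' (y : K) : i (g' y) = g y := LinearMap.congr_fun hig' y
  have hf'_inj : Function.Injective f' := fun a b h ↦ hf (congrArg Subtype.val h)
  have hf'g' : Function.Exact f' g' := fun y ↦ by
    rw [← map_eq_zero_iff i hi, hg', hfg y]
    exact exists_congr fun x ↦ (Subtype.ext_iff (a1 := f' x)).symm
  have hg'_surj : Function.Surjective g' := fun z ↦ by
    obtain ⟨y, hy⟩ := hg (i z)
    have hyK : y ∈ K := by simp [K, hy, hip.apply_apply_eq_zero]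
    exact ⟨⟨y, hyK⟩, hi ((hg' _).trans hy)⟩
  have hχZ : χ Z₁ + χ Z₂ = χ Z := h₂.2 _ _ h₁.1 hZ i p hi hip hp
  have hχY : χ K + χ Z₂ = χ Y := h₂.2 _ _ inferInstance hY K.subtype (p ∘ₗ g)
    K.injective_subtype (LinearMap.exact_subtype_ker_map _) (hp.comp hg)
  have hχK : χ X + χ Z₁ = χ K := h₁.2 _ _ hX inferInstance f' g' hf'_inj hf'g' hg'_surj
  omega

theorem MemAdloc.of_projective_presentation (hχ : IsSubadditive A χ) [Module.Finite A K]
    [Module.Finite A Q] [Module.Projective A Q] {j : K →ₗ[A] Q} {p : Q →ₗ[A] W}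
    (hjp : Function.Exact j p) (hp : Function.Surjective p) (hadd : χ K + χ W = χ Q) :
    MemAdloc A χ W := by
  have hW : Module.Finite A W := .of_surjective p hp
  refine ⟨hW, fun X Y _ _ _ _ hX hY f g hf hfg hg ↦ ?_⟩
  obtain ⟨w, hw⟩ := Module.projective_lifting_property g p hg
  obtain ⟨r, hr⟩ : ∃ r : K →ₗ[A] X, f ∘ₗ r = w ∘ₗ j := exists_comp_eq_of_exact hf hfg (by
    rw [← LinearMap.comp_assoc, hw, hjp.linearMap_comp_eq_zero])
  have hXWY : χ Y ≤ χ X + χ W := hχ.2.2 X Y W hX hY hW f g hfg hg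
  have hKQY : χ (X × Q) ≤ χ K + χ Y := hχ.2.2 _ _ _ inferInstance inferInstance hY _ _
    (exact_neg_prod_coprod hf hfg hjp hw hr) (surjective_coprod_of_exact hfg hp hw)
  have hXQ : χ (X × Q) = χ X + χ Q := hχ.2.1 X Q hX inferInstance
  omega

end AdditiveLocus

theorem isNoetherianRing_monoidAlgebra (k G : Type*) [CommRing k] [IsNoetherianRing k] [Monoid G]
    [Finite G] : IsNoetherianRing k[G] :=
  have : Module.Finite k k[G] := inferInstance
  .of_finite k k[G]

theorem isArtinianRing_monoidAlgebra (k G : Type*) [CommRing k] [IsArtinianRing k] [Monoid G]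
    [Finite G] : IsArtinianRing k[G] :=
  have : Module.Finite k k[G] := inferInstance
  .of_finite k k[G]

section TensorSum

variable {k G : Type} [Field k] [Group G]
  {χ : (X : Type) → [AddCommGroup X] → [Module k[G] X] → ℕ}
  {Z N : Type} [AddCommGroup Z] [Module k[G] Z] [AddCommGroup N] [Module k[G] N]
  {ι : Type*} [Fintype ι] {S : ι → Type} [∀ i, AddCommGroup (S i)] [∀ i, Module k[G] (S i)]

/-- The function `X ↦ ∑ i, χ (X ⊗ S i)` on `kG`-modules, for a finite family of modules `S`; it
is the `χ'` of the theorem when `S` runs over the simple modules. -/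
noncomputable def tensorSum (χ : (X : Type) → [AddCommGroup X] → [Module k[G] X] → ℕ)
    (S : ι → Type) [∀ i, AddCommGroup (S i)] [∀ i, Module k[G] (S i)] :
    (X : Type) → [AddCommGroup X] → [Module k[G] X] → ℕ :=
  fun X _ _ ↦ ∑ i, χ (dtensor k G X (S i))

theorem memAdloc_tensorSum_of_forall [Finite G] [∀ i, Module.Finite k[G] (S i)]
    [hZ : Module.Finite k[G] Z] (h : ∀ i, MemAdloc k[G] χ (dtensor k G Z (S i))) :
    MemAdloc k[G] (tensorSum χ S) Z := by
  refine ⟨hZ, fun X Y _ _ _ _ hX hY f g hf hfg hg ↦ ?_⟩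
  simp only [tensorSum, ← Finset.sum_add_distrib]
  exact Finset.sum_congr rfl fun i _ ↦
    (h i).2 _ _ inferInstance inferInstance (dtensorMap f .id) (dtensorMap g .id)
      (dtensorMap_injective hf Function.injective_id) (exact_dtensorMap_id hfg hg)
      (dtensorMap_surjective hg Function.surjective_id)

theorem MemAdloc.dtensor_of_tensorSum [Finite G] [∀ i, Module.Finite k[G] (S i)]
    (hχ : IsSubadditive k[G] χ) (h : MemAdloc k[G] (tensorSum χ S) Z) (i : ι) :
    MemAdloc k[G] χ (dtensor k G Z (S i)) := by
  have := isNoetherianRing_monoidAlgebra k G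
  have hZ := h.1
  obtain ⟨n, p, hp⟩ := Module.Finite.exists_fin' k[G] Z
  let K := LinearMap.ker p
  have hKp : Function.Exact K.subtype p := LinearMap.exact_subtype_ker_map p
  have hexact (i) := exact_dtensorMap_id (N := S i) hKp hp
  have hsurj (i) := dtensorMap_surjective (f' := (.id : S i →ₗ[k[G]] S i)) hp Function.surjective_id
  have hle (i) (_ : i ∈ Finset.univ) : χ (dtensor k G (Fin n → k[G]) (S i)) ≤
      χ (dtensor k G K (S i)) + χ (dtensor k G Z (S i)) :=
    hχ.2.2 _ _ _ inferInstance inferInstance inferInstance _ _ (hexact i) (hsurj i)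
  have hsum : tensorSum χ S K + tensorSum χ S Z = tensorSum χ S (Fin n → k[G]) :=
    h.2 _ _ inferInstance inferInstance _ _ K.injective_subtype hKp hp
  simp only [tensorSum, ← Finset.sum_add_distrib] at hsum
  have hadd := (Finset.sum_eq_sum_iff_of_le hle).1 hsum.symm i (Finset.mem_univ i)
  exact .of_projective_presentation hχ (hexact i) (hsurj i) hadd.symm

theorem memAdloc_dtensor_of_forall_simple [IsNoetherianRing k[G]] (hχ : IsSubadditive k[G] χ)
    (h : ∀ (T : Type) [AddCommGroup T] [Module k[G] T], IsSimpleModule k[G] T →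
      MemAdloc k[G] χ (dtensor k G Z T)) (hN : IsFiniteLength k[G] N) :
    MemAdloc k[G] χ (dtensor k G Z N) := by
  induction hN with
  | of_subsingleton => exact .of_subsingleton hχ
  | @of_simple_quotient M _ _ N hMN _ ih =>
    exact ih.of_exact (h (M ⧸ N) hMN)
      (dtensorMap_injective Function.injective_id N.injective_subtype)
      (exact_id_dtensorMap (LinearMap.exact_subtype_mkQ N) N.mkQ_surjective)
      (dtensorMap_surjective Function.surjective_id N.mkQ_surjective)

theorem MemAdloc.dtensor_of_tensorSum_of_forall_simple [Finite G] [∀ i, Module.Finite k[G] (S i)]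
    (hχ : IsSubadditive k[G] χ)
    (hS : ∀ (T : Type) [AddCommGroup T] [Module k[G] T], IsSimpleModule k[G] T →
      ∃ i, Nonempty (T ≃ₗ[k[G]] S i))
    (h : MemAdloc k[G] (tensorSum χ S) Z) [Module.Finite k[G] N] :
    MemAdloc k[G] χ (dtensor k G Z N) := by
  have := isNoetherianRing_monoidAlgebra k G
  have := isArtinianRing_monoidAlgebra k G
  refine memAdloc_dtensor_of_forall_simple hχ (fun T _ _ hT ↦ ?_)
    (isFiniteLength_iff_isNoetherian_isArtinian.2 ⟨inferInstance, inferInstance⟩)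
  obtain ⟨i, ⟨e⟩⟩ := hS T hT
  exact (h.dtensor_of_tensorSum hχ i).of_equiv hχ (dtensorCongr (.refl _ Z) e.symm)

theorem tensorClosed_tensorSum [Finite G] [∀ i, Module.Finite k[G] (S i)]
    (hχ : IsSubadditive k[G] χ)
    (hS : ∀ (T : Type) [AddCommGroup T] [Module k[G] T], IsSimpleModule k[G] T →
      ∃ i, Nonempty (T ≃ₗ[k[G]] S i)) : TensorClosed k G (tensorSum χ S) :=
  fun M N _ _ _ _ hM _ ↦
    have := hM.1
    memAdloc_tensorSum_of_forall fun i ↦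
      (hM.dtensor_of_tensorSum_of_forall_simple hχ hS).of_equiv hχ (dtensorAssoc k G M N (S i)).symm

theorem MemAdloc.of_tensorSum [Finite G] [∀ i, Module.Finite k[G] (S i)]
    (hχ : IsSubadditive k[G] χ)
    (hS : ∀ (T : Type) [AddCommGroup T] [Module k[G] T], IsSimpleModule k[G] T →
      ∃ i, Nonempty (T ≃ₗ[k[G]] S i)) (h : MemAdloc k[G] (tensorSum χ S) Z) :
    MemAdloc k[G] χ Z := by
  have : Module.Finite k[G] (Representation.trivial k G k).asModule :=
    have : Module.Finite k (Representation.trivial k G k).asModule :=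
      inferInstanceAs (Module.Finite k k)
    .of_restrictScalars_finite k k[G] _
  exact (h.dtensor_of_tensorSum_of_forall_simple hχ hS).of_equiv hχ (dtensorTrivial k G Z)

theorem MemAdloc.tensorSum_of_tensorClosed [Finite G] [∀ i, Module.Finite k[G] (S i)]
    {χ'' : (X : Type) → [AddCommGroup X] → [Module k[G] X] → ℕ} (hχ'' : TensorClosed k G χ'')
    (hle : ∀ (X : Type) [AddCommGroup X] [Module k[G] X], MemAdloc k[G] χ'' X → MemAdloc k[G] χ X)
    (h : MemAdloc k[G] χ'' Z) : MemAdloc k[G] (tensorSum χ S) Z :=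
  have := h.1
  memAdloc_tensorSum_of_forall fun i ↦ hle _ (hχ'' Z (S i) h inferInstance)

end TensorSum

theorem statement9_general (k G : Type) [Field k] [Group G] [Finite G]
    (χ : (X : Type) → [AddCommGroup X] → [Module k[G] X] → ℕ) (hχ : IsSubadditive k[G] χ)
    {ι : Type*} [Fintype ι] (S : ι → Type) [∀ i, AddCommGroup (S i)] [∀ i, Module k[G] (S i)]
    [∀ i, Module.Finite k[G] (S i)]
    (hS : ∀ (T : Type) [AddCommGroup T] [Module k[G] T], IsSimpleModule k[G] T →
      ∃ i, Nonempty (T ≃ₗ[k[G]] S i)) :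
    TensorClosed k G (tensorSum χ S) ∧
    (∀ (X : Type) [AddCommGroup X] [Module k[G] X],
      MemAdloc k[G] (tensorSum χ S) X → MemAdloc k[G] χ X) ∧
    ∀ χ'' : (X : Type) → [AddCommGroup X] → [Module k[G] X] → ℕ, TensorClosed k G χ'' →
      (∀ (X : Type) [AddCommGroup X] [Module k[G] X],
        MemAdloc k[G] χ'' X → MemAdloc k[G] χ X) →
      ∀ (X : Type) [AddCommGroup X] [Module k[G] X],
        MemAdloc k[G] χ'' X → MemAdloc k[G] (tensorSum χ S) X :=
  ⟨tensorClosed_tensorSum hχ hS, fun _ _ _ hX ↦ hX.of_tensorSum hχ hS,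
    fun _ hχ'' hle _ _ _ hX ↦ hX.tensorSum_of_tensorClosed hχ'' hle⟩

/-- With `χ'(X) := Σᵢ χ(X ⊗ Sᵢ)` as above, `χ'` is tensor closed,
`Adloc(χ') ⊆ Adloc(χ)`, and `χ'` is minimal with these properties: any tensor closed
subadditive `χ''` with `Adloc(χ'') ⊆ Adloc(χ)` satisfies `Adloc(χ'') ⊆ Adloc(χ')`. -/
theorem statement9 (k G : Type) [Field k] [Group G] [Finite G]
    (χ : (X : Type) → [AddCommGroup X] → [Module (MonoidAlgebra k G) X] → ℕ)
    (hχ : IsSubadditive (MonoidAlgebra k G) χ)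
    (m : ℕ) (S : Fin m → Type)
    [∀ i, AddCommGroup (S i)] [∀ i, Module (MonoidAlgebra k G) (S i)]
    (hS : IsCompleteSetOfSimples k G S) :
    TensorClosed k G (fun X _ _ => ∑ i, χ (dtensor k G X (S i))) ∧
    (∀ (X : Type) [AddCommGroup X] [Module (MonoidAlgebra k G) X],
      MemAdloc (MonoidAlgebra k G) (fun X _ _ => ∑ i, χ (dtensor k G X (S i))) X →
      MemAdloc (MonoidAlgebra k G) χ X) ∧
    (∀ χ'' : (X : Type) → [AddCommGroup X] → [Module (MonoidAlgebra k G) X] → ℕ,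
      IsSubadditive (MonoidAlgebra k G) χ'' → TensorClosed k G χ'' →
      (∀ (X : Type) [AddCommGroup X] [Module (MonoidAlgebra k G) X],
        MemAdloc (MonoidAlgebra k G) χ'' X → MemAdloc (MonoidAlgebra k G) χ X) →
      (∀ (X : Type) [AddCommGroup X] [Module (MonoidAlgebra k G) X],
        MemAdloc (MonoidAlgebra k G) χ'' X →
        MemAdloc (MonoidAlgebra k G) (fun X _ _ => ∑ i, χ (dtensor k G X (S i))) X)) := by
  have (i : Fin m) : Module.Finite (MonoidAlgebra k G) (S i) := have := hS.1 i; inferInstance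
  have h := statement9_general k G χ hχ S fun T _ _ ↦ hS.2.2 T _ _
  exact ⟨h.1, h.2.1, fun χ'' _ ↦ h.2.2 χ''⟩
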